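/- arXiv:2402.10536 — 5 statements merged into one kernel-verified Lean document; each statement's English description precedes it below -/
import Mathlib

section
/- Let ᾱ₁, σ̄₁, ā, c̄ ∈ ℝ with (ā, b̄) ≠ (0,0), where b̄ = 1 − ā − c̄, and let ℰ = ℰ(ᾱ₁, σ̄₁, ā, c̄). If Λ ⊆ ℝ is a compact set that is hyperbolic for ℰ, then Λ is expansive for ℰ: there exists χ > 0 such that for any two orbits (ξ_t)_{t∈ℤ} and (ξ̃_t)_{t∈ℤ} with (ξ_t, ξ_{t+1}) ∈ ℰ ∩ (Λ×Λ) and (ξ̃_t, ξ̃_{t+1}) ∈ ℰ ∩ (Λ×Λ) for all t, if ξ_0 ≠ ξ̃_0 then |ξ_n − ξ̃_n| ≥ χ for some n ∈ ℤ. -/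
noncomputable section

/-- The quadratic relation ℰ(ᾱ₁, σ̄₁, ā, c̄) on ℝ, with b̄ = 1 − ā − c̄. -/
def Erel (α σ a c : ℝ) : Set (ℝ × ℝ) :=
  {p : ℝ × ℝ | α - σ * p.1 + a * p.2 ^ 2 + (1 - a - c) * p.2 * p.1 + c * p.1 ^ 2 = 0}

/-- The slopeE m(u,v) of the tangent to the relation at (u,v). -/
def slopeE (σ a c : ℝ) (u v : ℝ) : ℝ :=
  (σ - (1 - a - c) * v - 2 * c * u) / (2 * a * v + (1 - a - c) * u)

/-- (ξ_t)_{t∈ℤ} is an orbit of the relation E lying in Λ. -/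
def IsOrbitIn (E : Set (ℝ × ℝ)) (Λ : Set ℝ) (ξ : ℤ → ℝ) : Prop :=
  ∀ t : ℤ, (ξ t, ξ (t + 1)) ∈ E ∩ Λ ×ˢ Λ

/-- Λ is expanding for ℰ(α,σ,a,c) with constants C > 0 and lam > 1. -/
def ExpandingRelWith (α σ a c : ℝ) (Λ : Set ℝ) (C lam : ℝ) : Prop :=
  ∀ ξ : ℤ → ℝ, IsOrbitIn (Erel α σ a c) Λ ξ →
    (∀ t : ℤ, 2 * a * ξ (t + 1) + (1 - a - c) * ξ t ≠ 0) ∧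
    ∀ t : ℤ, ∀ k : ℕ, 1 ≤ k →
      C * lam ^ k ≤ ∏ n ∈ Finset.range k, |slopeE σ a c (ξ (t + n)) (ξ (t + n + 1))|

/-- Λ is contracting for ℰ(α,σ,a,c) with constants C > 0 and lam > 1. -/
def ContractingRelWith (α σ a c : ℝ) (Λ : Set ℝ) (C lam : ℝ) : Prop :=
  ∀ ξ : ℤ → ℝ, IsOrbitIn (Erel α σ a c) Λ ξ →
    (∀ t : ℤ, slopeE σ a c (ξ t) (ξ (t + 1)) ≠ 0) ∧
    ∀ t : ℤ, ∀ k : ℕ, 1 ≤ k →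
      ∏ n ∈ Finset.range k, |slopeE σ a c (ξ (t + n)) (ξ (t + n + 1))| ≤ C⁻¹ * lam⁻¹ ^ k

def ExpandingRel (α σ a c : ℝ) (Λ : Set ℝ) : Prop :=
  ∃ C > 0, ∃ lam > 1, ExpandingRelWith α σ a c Λ C lam

def ContractingRel (α σ a c : ℝ) (Λ : Set ℝ) : Prop :=
  ∃ C > 0, ∃ lam > 1, ContractingRelWith α σ a c Λ C lam

/-- Λ is (uniformly) hyperbolic for the relation ℰ(α,σ,a,c). -/
def HyperbolicRel (α σ a c : ℝ) (Λ : Set ℝ) : Prop :=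
  ExpandingRel α σ a c Λ ∨ ContractingRel α σ a c Λ

def BackwardComplete (E : Set (ℝ × ℝ)) (Λ : Set ℝ) : Prop :=
  ∀ v ∈ Λ, ∃ u ∈ Λ, (u, v) ∈ E

def ForwardComplete (E : Set (ℝ × ℝ)) (Λ : Set ℝ) : Prop :=
  ∀ u ∈ Λ, ∃ v ∈ Λ, (u, v) ∈ E

/-- Σ^Λ : the set of bi-infinite orbits of the relation E lying in Λ. -/
def SigmaSet (E : Set (ℝ × ℝ)) (Λ : Set ℝ) : Set (ℤ → ℝ) :=
  {ξ | IsOrbitIn E Λ ξ}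

/-- The shift map S on bi-infinite sequences. -/
def shiftSeq {X : Type*} (z : ℤ → X) : ℤ → X := fun t => z (t + 1)

/-- A bounded bi-infinite real sequence (an element of l∞(ℤ,ℝ)). -/
def BddSeq (ζ : ℤ → ℝ) : Prop := ∃ M : ℝ, ∀ t : ℤ, |ζ t| ≤ M

/-- The bi-infinite orbits of a closed relation in a compact set form a compact set. -/
theorem isCompact_setOf_isOrbitIn {E : Set (ℝ × ℝ)} (hE : IsClosed E) {Λ : Set ℝ}
    (hΛ : IsCompact Λ) : IsCompact {ξ : ℤ → ℝ | IsOrbitIn E Λ ξ} := by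
  refine (isCompact_univ_pi fun _ : ℤ => hΛ).of_isClosed_subset ?_ fun ξ hξ t _ => (hξ t).2.1
  simp only [IsOrbitIn, Set.ofPred_forall]
  exact isClosed_iInter fun t => (hE.inter (hΛ.isClosed.prod hΛ.isClosed)).preimage
    ((continuous_apply t).prodMk (continuous_apply (t + 1)))

theorem isClosed_Erel (α σ a c : ℝ) : IsClosed (Erel α σ a c) :=
  isClosed_eq (by fun_prop) continuous_const

theorem IsOrbitIn.shift {E : Set (ℝ × ℝ)} {Λ : Set ℝ} {ξ : ℤ → ℝ} (hξ : IsOrbitIn E Λ ξ)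
    (s : ℤ) : IsOrbitIn E Λ fun t => ξ (s + t) := fun t => by
  simpa only [add_assoc] using hξ (s + t)

/-- A continuous function of consecutive points that vanishes on no orbit in a compact set is
uniformly bounded away from zero along all orbits. -/
theorem exists_pos_le_abs_of_orbit_ne_zero {E : Set (ℝ × ℝ)} (hE : IsClosed E) {Λ : Set ℝ}
    (hΛ : IsCompact Λ) {f : ℝ → ℝ → ℝ} (hf : Continuous fun p : ℝ × ℝ => f p.1 p.2)
    (h : ∀ ξ, IsOrbitIn E Λ ξ → ∀ t, f (ξ t) (ξ (t + 1)) ≠ 0) :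
    ∃ d > 0, ∀ ξ, IsOrbitIn E Λ ξ → ∀ t, d ≤ |f (ξ t) (ξ (t + 1))| := by
  have hcont : Continuous fun ξ : ℤ → ℝ => |f (ξ 0) (ξ 1)| := by
    have hpair : Continuous fun ξ : ℤ → ℝ => (ξ 0, ξ 1) := by fun_prop
    exact (hf.comp hpair).abs
  obtain ⟨d, hd, hle⟩ := (isCompact_setOf_isOrbitIn hE hΛ).exists_forall_le'
    hcont.continuousOn (a := 0) fun ξ hξ => abs_pos.2 (h ξ hξ 0)
  exact ⟨d, hd, fun ξ hξ t => by simpa using hle _ (hξ.shift t)⟩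

/-- Near a point of the relation where neither partial derivative is small, the ratio of the
increments of the coordinates is within a factor `r` of the slope. -/
theorem exists_slopeE_increment_bounds (α σ a c : ℝ) {d r : ℝ} (hd : 0 < d) (hr : 1 < r) :
    ∃ χ > 0, ∀ u v u' v' : ℝ, (u, v) ∈ Erel α σ a c → (u', v') ∈ Erel α σ a c →
      d ≤ |σ - (1 - a - c) * v - 2 * c * u| → d ≤ |2 * a * v + (1 - a - c) * u| →
      |u - u'| < χ → |v - v'| < χ →
      |slopeE σ a c u v| * |u - u'| ≤ r * |v - v'| ∧
        |v - v'| ≤ r * |slopeE σ a c u v| * |u - u'| := by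
  set M : ℝ := |a| + |1 - a - c| + |c| + 1 with hM
  have hM0 : 0 < M := by positivity
  set η : ℝ := (r - 1) / (r + 1) with hη
  have hη0 : 0 < η := div_pos (by linarith) (by linarith)
  have hηr : 1 + η = r * (1 - η) := by rw [hη]; field_simp; ring
  have hη1 : 0 < 1 - η := by
    by_contra! hneg
    nlinarith
  refine ⟨η * d / M, by positivity, fun u v u' v' hu hu' hN hD hx hy => ?_⟩
  simp only [Erel, Set.mem_ofPred_eq] at hu hu'
  rw [slopeE, abs_div]
  set N := σ - (1 - a - c) * v - 2 * c * u with hNdef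
  set D := 2 * a * v + (1 - a - c) * u with hDdef
  set x := u - u' with hxdef
  set y := v - v' with hydef
  have hid : y * (D - (a * y + (1 - a - c) * x)) = x * (N + c * x) := by
    rw [hNdef, hDdef, hxdef, hydef]; linear_combination hu - hu'
  have hX : M * (η * d / M) = η * d := by field_simp
  have hpertD : |a * y + (1 - a - c) * x| ≤ η * |D| := by
    calc |a * y + (1 - a - c) * x| ≤ |a| * |y| + |1 - a - c| * |x| := by
          simpa only [abs_mul] using abs_add_le (a * y) ((1 - a - c) * x)
      _ ≤ |a| * (η * d / M) + |1 - a - c| * (η * d / M) := by gcongr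
      _ ≤ M * (η * d / M) := by
          rw [← add_mul]; gcongr; rw [hM]; linarith [abs_nonneg c]
      _ ≤ η * |D| := by rw [hX]; gcongr
  have hpertN : |c * x| ≤ η * |N| := by
    calc |c * x| = |c| * |x| := abs_mul _ _
      _ ≤ M * (η * d / M) := by
          gcongr; rw [hM]; linarith [abs_nonneg a, abs_nonneg (1 - a - c)]
      _ ≤ η * |N| := by rw [hX]; gcongr
  have habs := congrArg abs hid
  rw [abs_mul, abs_mul] at habs
  have hD1 := abs_sub_abs_le_abs_sub D (a * y + (1 - a - c) * x)
  have hD2 := abs_sub D (a * y + (1 - a - c) * x)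
  have hN1 := abs_sub_abs_le_abs_sub N (-(c * x))
  have hN2 := abs_add_le N (c * x)
  rw [sub_neg_eq_add, abs_neg] at hN1
  have hD0 : 0 < |D| := hd.trans_le hD
  have hlo : |x| * (|N| * (1 - η)) ≤ |y| * (|D| * (1 + η)) := by
    calc _ ≤ |x| * |N + c * x| := by gcongr; linarith
      _ = |y| * |D - (a * y + (1 - a - c) * x)| := habs.symm
      _ ≤ _ := by gcongr; linarith
  have hhi : |y| * (|D| * (1 - η)) ≤ |x| * (|N| * (1 + η)) := by
    calc _ ≤ |y| * |D - (a * y + (1 - a - c) * x)| := by gcongr; linarith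
      _ = |x| * |N + c * x| := habs
      _ ≤ _ := by gcongr; linarith
  rw [hηr] at hlo hhi
  constructor
  · rw [div_mul_eq_mul_div, div_le_iff₀ hD0]
    refine le_of_mul_le_mul_right ?_ hη1
    linarith
  · rw [mul_div_assoc', div_mul_eq_mul_div, le_div_iff₀ hD0]
    refine le_of_mul_le_mul_right ?_ hη1
    linarith

theorem prod_mul_le_pow_mul {m x : ℤ → ℝ} {r : ℝ} (hr : 0 ≤ r) (hm : ∀ t, 0 ≤ m t)
    (h : ∀ t, m t * x t ≤ r * x (t + 1)) (t : ℤ) (k : ℕ) :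
    (∏ n ∈ Finset.range k, m (t + n)) * x t ≤ r ^ k * x (t + k) := by
  induction k with
  | zero => simp
  | succ k ih =>
    rw [Finset.prod_range_succ]
    push_cast
    rw [← add_assoc]
    calc _ = m (t + k) * ((∏ n ∈ Finset.range k, m (t + n)) * x t) := by ring
      _ ≤ m (t + k) * (r ^ k * x (t + k)) := mul_le_mul_of_nonneg_left ih (hm _)
      _ = r ^ k * (m (t + k) * x (t + k)) := by ring
      _ ≤ r ^ k * (r * x (t + k + 1)) := mul_le_mul_of_nonneg_left (h _) (by positivity)
      _ = _ := by ring

theorem le_pow_mul_prod_mul {m x : ℤ → ℝ} {r : ℝ} (hr : 0 ≤ r) (hm : ∀ t, 0 ≤ m t)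
    (h : ∀ t, x (t + 1) ≤ r * m t * x t) (t : ℤ) (k : ℕ) :
    x (t + k) ≤ r ^ k * (∏ n ∈ Finset.range k, m (t + n)) * x t := by
  induction k with
  | zero => simp
  | succ k ih =>
    rw [Finset.prod_range_succ]
    push_cast
    rw [← add_assoc]
    calc _ ≤ r * m (t + k) * x (t + k) := h _
      _ ≤ r * m (t + k) * (r ^ k * (∏ n ∈ Finset.range k, m (t + n)) * x t) :=
          mul_le_mul_of_nonneg_left ih (mul_nonneg hr (hm _))
      _ = _ := by ring

/-- If slopes never vanish along orbits in a compact set, then along two orbits that stay close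
the increments grow like the slopes, up to a factor `r` per step. -/
theorem exists_orbit_increment_bounds {α σ a c : ℝ} {Λ : Set ℝ} (hΛ : IsCompact Λ)
    (h : ∀ ξ, IsOrbitIn (Erel α σ a c) Λ ξ → ∀ t, slopeE σ a c (ξ t) (ξ (t + 1)) ≠ 0)
    {r : ℝ} (hr : 1 < r) :
    ∃ χ > 0, ∀ ξ ξ' : ℤ → ℝ,
      IsOrbitIn (Erel α σ a c) Λ ξ → IsOrbitIn (Erel α σ a c) Λ ξ' →
      (∀ n, |ξ n - ξ' n| < χ) → ∀ t : ℤ,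
        |slopeE σ a c (ξ t) (ξ (t + 1))| * |ξ t - ξ' t| ≤ r * |ξ (t + 1) - ξ' (t + 1)| ∧
        |ξ (t + 1) - ξ' (t + 1)| ≤
          r * |slopeE σ a c (ξ t) (ξ (t + 1))| * |ξ t - ξ' t| := by
  have hE := isClosed_Erel α σ a c
  obtain ⟨d₁, hd₁, hN⟩ := exists_pos_le_abs_of_orbit_ne_zero hE hΛ
    (f := fun u v => σ - (1 - a - c) * v - 2 * c * u) (by fun_prop)
    fun ξ hξ t => (div_ne_zero_iff.1 (h ξ hξ t)).1
  obtain ⟨d₂, hd₂, hD⟩ := exists_pos_le_abs_of_orbit_ne_zero hE hΛ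
    (f := fun u v => 2 * a * v + (1 - a - c) * u) (by fun_prop)
    fun ξ hξ t => (div_ne_zero_iff.1 (h ξ hξ t)).2
  obtain ⟨χ, hχ, hstep⟩ := exists_slopeE_increment_bounds α σ a c (lt_min hd₁ hd₂) hr
  exact ⟨χ, hχ, fun ξ ξ' hξ hξ' hlt t => hstep _ _ _ _ (hξ t).1 (hξ' t).1
    ((min_le_left _ _).trans (hN ξ hξ t)) ((min_le_right _ _).trans (hD ξ hξ t))
    (hlt t) (hlt (t + 1))⟩

theorem ExpandingRelWith.slopeE_ne_zero {α σ a c : ℝ} {Λ : Set ℝ} {C lam : ℝ} (hC : 0 < C)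
    (hlam : 0 < lam) (h : ExpandingRelWith α σ a c Λ C lam) (ξ : ℤ → ℝ)
    (hξ : IsOrbitIn (Erel α σ a c) Λ ξ) (t : ℤ) : slopeE σ a c (ξ t) (ξ (t + 1)) ≠ 0 := by
  have hk := (h ξ hξ).2 t 1 le_rfl
  simp only [pow_one, Finset.prod_range_one, Nat.cast_zero, add_zero] at hk
  exact abs_pos.1 ((mul_pos hC hlam).trans_le hk)

theorem exists_one_le_lt_mul_pow {r : ℝ} (hr : 1 < r) {A : ℝ} (hA : 0 < A) (B : ℝ) :
    ∃ k : ℕ, 1 ≤ k ∧ B < A * r ^ k := by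
  obtain ⟨k, hk⟩ := pow_unbounded_of_one_lt (B / A) hr
  rw [div_lt_iff₀' hA] at hk
  refine ⟨k + 1, by omega, hk.trans_le ?_⟩
  gcongr
  · exact hr.le
  · omega

/-- a compact hyperbolic set for the relation ℰ(ᾱ₁, σ̄₁, ā, c̄) (with
(ā, b̄) ≠ (0,0)) is expansive. -/
theorem hyperbolic_compact_is_expansive
    (α σ a c : ℝ) (hab : ¬(a = 0 ∧ 1 - a - c = 0))
    (Λ : Set ℝ) (hΛ : IsCompact Λ)
    (hhyp : HyperbolicRel α σ a c Λ) :
    ∃ χ > 0, ∀ ξ ξ' : ℤ → ℝ,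
      IsOrbitIn (Erel α σ a c) Λ ξ → IsOrbitIn (Erel α σ a c) Λ ξ' →
      ξ 0 ≠ ξ' 0 → ∃ n : ℤ, χ ≤ |ξ n - ξ' n| := by
  rcases hhyp with ⟨C, hC, lam, hlam, h⟩ | ⟨C, hC, lam, hlam, h⟩
  all_goals
    obtain ⟨r, hr, rfl⟩ : ∃ r : ℝ, 1 < r ∧ r ^ 2 = lam :=
      ⟨√lam, Real.lt_sqrt_of_sq_lt (by simpa using hlam), Real.sq_sqrt (by linarith)⟩
    have hr0 : 0 < r := one_pos.trans hr
  · obtain ⟨χ, hχ, hstep⟩ :=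
      exists_orbit_increment_bounds hΛ (h.slopeE_ne_zero hC (by positivity)) hr
    refine ⟨χ, hχ, fun ξ ξ' hξ hξ' hne => ?_⟩
    by_contra! hlt
    have hx0 : 0 < |ξ 0 - ξ' 0| := abs_pos.2 (sub_ne_zero.2 hne)
    obtain ⟨k, hk1, hk⟩ := exists_one_le_lt_mul_pow hr (mul_pos hC hx0) χ
    have hgrow := prod_mul_le_pow_mul (m := fun t => |slopeE σ a c (ξ t) (ξ (t + 1))|)
      (x := fun t => |ξ t - ξ' t|) hr0.le (fun _ => abs_nonneg _)
      (fun t => (hstep ξ ξ' hξ hξ' hlt t).1) 0 k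
    have hexp := mul_le_mul_of_nonneg_right ((h ξ hξ).2 0 k hk1) hx0.le
    have hbound : r ^ k * (C * |ξ 0 - ξ' 0| * r ^ k) ≤ r ^ k * |ξ (0 + k) - ξ' (0 + k)| := by
      refine le_trans (le_of_eq ?_) (hexp.trans hgrow)
      ring
    linarith [le_of_mul_le_mul_left hbound (pow_pos hr0 k), hlt (0 + k)]
  · obtain ⟨χ, hχ, hstep⟩ := exists_orbit_increment_bounds hΛ (fun ξ hξ => (h ξ hξ).1) hr
    refine ⟨χ, hχ, fun ξ ξ' hξ hξ' hne => ?_⟩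
    by_contra! hlt
    have hx0 : 0 < |ξ 0 - ξ' 0| := abs_pos.2 (sub_ne_zero.2 hne)
    obtain ⟨k, hk1, hk⟩ := exists_one_le_lt_mul_pow hr (mul_pos hC hx0) χ
    have hgrow := le_pow_mul_prod_mul (m := fun t => |slopeE σ a c (ξ t) (ξ (t + 1))|)
      (x := fun t => |ξ t - ξ' t|) hr0.le (fun _ => abs_nonneg _)
      (fun t => (hstep ξ ξ' hξ hξ' hlt t).2) (-k) k
    simp only [neg_add_cancel] at hgrow
    have hbound : |ξ 0 - ξ' 0| ≤ r ^ k * (C⁻¹ * (r ^ 2)⁻¹ ^ k) * χ := by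
      refine hgrow.trans ?_
      gcongr
      · exact (h ξ hξ).2 (-k) k hk1
      · exact (hlt _).le
    have hsimp : r ^ k * (C⁻¹ * (r ^ 2)⁻¹ ^ k) * χ = χ / (C * r ^ k) := by
      rw [inv_pow, ← pow_mul, mul_comm 2 k, pow_mul]
      field_simp
    rw [hsimp, le_div_iff₀ (by positivity)] at hbound
    linarith
end
end

section
/- Let (m_t)_{t∈ℤ} be a sequence of nonzero reals and suppose there are constants C > 0 and λ > 1 such that ∏_{n=0}^{k−1} |m_{t+n}| ≥ C·λ^k for all t ∈ ℤ and all k ≥ 1. Then for every bounded sequence η = (η_t)_{t∈ℤ} of reals, the system m_{t−1}⁻¹·ζ_t − ζ_{t−1} = η_t (t ∈ ℤ) has a unique bounded solution ζ = (ζ_t)_{t∈ℤ}, given by ζ_{t−1} = −η_t − Σ_{k=0}^{∞} (∏_{n=0}^{k} m_{t−1+n})⁻¹·η_{t+1+k}, and this solution satisfies |ζ_{t−1} + η_t| ≤ ‖η‖∞·C⁻¹·(λ−1)⁻¹ for all t ∈ ℤ. -/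
noncomputable section

/-- The `k`-th term of the series defining the bounded solution. -/
def solutionTerm (m η : ℤ → ℝ) (t : ℤ) (k : ℕ) : ℝ :=
  (∏ n ∈ Finset.range (k + 1), m (t - 1 + n))⁻¹ * η (t + 1 + k)

/-- The candidate bounded solution, given by the explicit series. -/
def seriesSolution (m η : ℤ → ℝ) (t : ℤ) : ℝ :=
  -η (t + 1) - ∑' k : ℕ, solutionTerm m η (t + 1) k

lemma BddSeq.abs_le_iSup {η : ℤ → ℝ} (hη : BddSeq η) (t : ℤ) : |η t| ≤ ⨆ s : ℤ, |η s| := by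
  obtain ⟨M, hM⟩ := hη
  exact le_ciSup (f := fun s => |η s|) ⟨M, by rintro _ ⟨s, rfl⟩; exact hM s⟩ t

lemma hasSum_inv_pow_succ {lam : ℝ} (hlam : 1 < lam) :
    HasSum (fun k : ℕ => (lam ^ (k + 1))⁻¹) (lam - 1)⁻¹ := by
  have hpos : 0 < lam := by linarith
  have h := (hasSum_geometric_of_lt_one (inv_nonneg.2 hpos.le)
    (inv_lt_one_of_one_lt₀ hlam)).mul_left lam⁻¹
  have hval : lam⁻¹ * (1 - lam⁻¹)⁻¹ = (lam - 1)⁻¹ := by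
    rw [← mul_inv, mul_sub, mul_inv_cancel₀ hpos.ne', mul_one]
  rw [hval] at h
  simpa only [pow_succ', mul_inv, inv_pow] using h

lemma abs_inv_prod_le {m : ℤ → ℝ} {C lam : ℝ} (hC : 0 < C) (hlam : 1 < lam)
    (hprod : ∀ t : ℤ, ∀ k : ℕ, 1 ≤ k → C * lam ^ k ≤ ∏ n ∈ Finset.range k, |m (t + n)|)
    (t : ℤ) (k : ℕ) :
    |(∏ n ∈ Finset.range (k + 1), m (t + n))⁻¹| ≤ C⁻¹ * (lam ^ (k + 1))⁻¹ := by
  have hpos : 0 < lam := by linarith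
  rw [abs_inv, Finset.abs_prod, ← mul_inv]
  exact inv_anti₀ (by positivity) (hprod t (k + 1) (by omega))

lemma abs_solutionTerm_le {m : ℤ → ℝ} {C lam : ℝ} (hC : 0 < C) (hlam : 1 < lam)
    (hprod : ∀ t : ℤ, ∀ k : ℕ, 1 ≤ k → C * lam ^ k ≤ ∏ n ∈ Finset.range k, |m (t + n)|)
    {η : ℤ → ℝ} (hη : BddSeq η) (t : ℤ) (k : ℕ) :
    ‖solutionTerm m η t k‖ ≤ (⨆ s : ℤ, |η s|) * C⁻¹ * (lam ^ (k + 1))⁻¹ := by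
  have hpos : 0 < lam := by linarith
  rw [solutionTerm, Real.norm_eq_abs, abs_mul]
  calc _ ≤ (C⁻¹ * (lam ^ (k + 1))⁻¹) * ⨆ s : ℤ, |η s| :=
        mul_le_mul (abs_inv_prod_le hC hlam hprod _ k) (hη.abs_le_iSup _) (abs_nonneg _)
          (by positivity)
    _ = _ := by ring

lemma solutionTerm_zero (m η : ℤ → ℝ) (t : ℤ) :
    solutionTerm m η t 0 = (m (t - 1))⁻¹ * η (t + 1) := by
  simp [solutionTerm]

lemma solutionTerm_succ (m η : ℤ → ℝ) (t : ℤ) (k : ℕ) :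
    solutionTerm m η t (k + 1) = (m (t - 1))⁻¹ * solutionTerm m η (t + 1) k := by
  have hη : t + 1 + ((k + 1 : ℕ) : ℤ) = t + 1 + 1 + k := by push_cast; ring
  have hm : ∀ n : ℕ, t - 1 + ((n + 1 : ℕ) : ℤ) = t + 1 - 1 + n := fun n => by push_cast; ring
  rw [solutionTerm, solutionTerm, Finset.prod_range_succ', hη]
  simp only [hm, Nat.cast_zero, add_zero, mul_inv]
  ring

lemma seriesSolution_sub_one (m η : ℤ → ℝ) (t : ℤ) :
    seriesSolution m η (t - 1) = -η t - ∑' k : ℕ, solutionTerm m η t k := by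
  rw [seriesSolution, sub_add_cancel]

lemma seriesSolution_spec {m η : ℤ → ℝ} (hsum : ∀ t, Summable (solutionTerm m η t)) (t : ℤ) :
    (m (t - 1))⁻¹ * seriesSolution m η t - seriesSolution m η (t - 1) = η t := by
  rw [seriesSolution_sub_one, (hsum t).tsum_eq_zero_add, solutionTerm_zero]
  simp only [solutionTerm_succ, tsum_mul_left, seriesSolution]
  ring

lemma eq_inv_prod_mul_of_homogeneous {m d : ℤ → ℝ}
    (hd : ∀ t : ℤ, d t = (m t)⁻¹ * d (t + 1)) (t : ℤ) (k : ℕ) :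
    d t = (∏ n ∈ Finset.range k, m (t + n))⁻¹ * d (t + k) := by
  induction k with
  | zero => simp
  | succ k ih =>
    rw [ih, hd (t + k), Finset.prod_range_succ, mul_inv, Nat.cast_succ, add_assoc, mul_assoc]

lemma BddSeq.eq_zero_of_homogeneous {m : ℤ → ℝ} {C lam : ℝ} (hC : 0 < C) (hlam : 1 < lam)
    (hprod : ∀ t : ℤ, ∀ k : ℕ, 1 ≤ k → C * lam ^ k ≤ ∏ n ∈ Finset.range k, |m (t + n)|)
    {d : ℤ → ℝ} (hbd : BddSeq d) (hd : ∀ t : ℤ, d t = (m t)⁻¹ * d (t + 1)) (t : ℤ) :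
    d t = 0 := by
  have hpos : 0 < lam := by linarith
  have hlim : Filter.Tendsto (fun k : ℕ => C⁻¹ * (lam ^ (k + 1))⁻¹ * ⨆ s : ℤ, |d s|)
      Filter.atTop (nhds 0) := by
    simpa using ((hasSum_inv_pow_succ hlam).summable.tendsto_atTop_zero.const_mul
      C⁻¹).mul_const (⨆ s : ℤ, |d s|)
  refine abs_nonpos_iff.1 (ge_of_tendsto' hlim fun k => ?_)
  rw [eq_inv_prod_mul_of_homogeneous hd t (k + 1), abs_mul]
  exact mul_le_mul (abs_inv_prod_le hC hlam hprod t k) (hbd.abs_le_iSup _) (abs_nonneg _)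
    (by positivity)

lemma BddSeq.sub {ζ ξ : ℤ → ℝ} (hζ : BddSeq ζ) (hξ : BddSeq ξ) : BddSeq (ζ - ξ) := by
  obtain ⟨M, hM⟩ := hζ
  obtain ⟨N, hN⟩ := hξ
  exact ⟨M + N, fun t => (abs_sub _ _).trans (add_le_add (hM t) (hN t))⟩

/-- if the slope products grow as ∏|m| ≥ C·λ^k, then for every bounded η the
system m_{t−1}⁻¹ζ_t − ζ_{t−1} = η_t has a unique bounded solution, given by the explicit
series, and satisfying |ζ_{t−1} + η_t| ≤ ‖η‖∞ C⁻¹ (λ−1)⁻¹. -/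
theorem expanding_case_unique_bounded_solution
    (m : ℤ → ℝ) (hm : ∀ t : ℤ, m t ≠ 0)
    (C lam : ℝ) (hC : 0 < C) (hlam : 1 < lam)
    (hprod : ∀ t : ℤ, ∀ k : ℕ, 1 ≤ k →
      C * lam ^ k ≤ ∏ n ∈ Finset.range k, |m (t + n)|)
    (η : ℤ → ℝ) (hη : BddSeq η) :
    (∃! ζ : ℤ → ℝ, BddSeq ζ ∧ ∀ t : ℤ, (m (t - 1))⁻¹ * ζ t - ζ (t - 1) = η t) ∧
    ∀ ζ : ℤ → ℝ, BddSeq ζ → (∀ t : ℤ, (m (t - 1))⁻¹ * ζ t - ζ (t - 1) = η t) →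
      (∀ t : ℤ, ζ (t - 1) =
        -η t - ∑' k : ℕ, (∏ n ∈ Finset.range (k + 1), m (t - 1 + n))⁻¹ * η (t + 1 + k)) ∧
      (∀ t : ℤ, |ζ (t - 1) + η t| ≤ (⨆ s : ℤ, |η s|) * C⁻¹ * (lam - 1)⁻¹) := by
  have hterm := abs_solutionTerm_le hC hlam hprod hη
  have hgeom := (hasSum_inv_pow_succ hlam).mul_left ((⨆ s : ℤ, |η s|) * C⁻¹)
  have hsum : ∀ t, Summable (solutionTerm m η t) := fun t =>
    Summable.of_norm_bounded hgeom.summable (hterm t)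
  have hbound : ∀ t, |∑' k : ℕ, solutionTerm m η t k| ≤ (⨆ s : ℤ, |η s|) * C⁻¹ * (lam - 1)⁻¹ :=
    fun t => tsum_of_norm_bounded hgeom (hterm t)
  have hbdd : BddSeq (seriesSolution m η) :=
    ⟨(⨆ s : ℤ, |η s|) + (⨆ s : ℤ, |η s|) * C⁻¹ * (lam - 1)⁻¹, fun t =>
      (abs_sub _ _).trans (add_le_add ((abs_neg _).trans_le (hη.abs_le_iSup _)) (hbound _))⟩
  have huniq : ∀ ζ : ℤ → ℝ, BddSeq ζ →
      (∀ t : ℤ, (m (t - 1))⁻¹ * ζ t - ζ (t - 1) = η t) → ζ = seriesSolution m η := by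
    intro ζ hζ heq
    funext t
    refine sub_eq_zero.1 ((hζ.sub hbdd).eq_zero_of_homogeneous hC hlam hprod (fun s => ?_) t)
    have h₁ := heq (s + 1)
    have h₂ := seriesSolution_spec hsum (s + 1)
    rw [add_sub_cancel_right] at h₁ h₂
    simp only [Pi.sub_apply]
    linarith
  refine ⟨⟨seriesSolution m η, ⟨hbdd, seriesSolution_spec hsum⟩,
    fun ζ hζ => huniq ζ hζ.1 hζ.2⟩, fun ζ hζ heq => ?_⟩
  obtain rfl := huniq ζ hζ heq
  refine ⟨seriesSolution_sub_one m η, fun t => ?_⟩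
  rw [seriesSolution_sub_one, show ∀ a b : ℝ, -a - b + a = -b from fun a b => by ring, abs_neg]
  exact hbound t
end
end

section
/- Assume (r, ā, c̄) ∈ ℛₙ⁺ with associated compact set B, integer n ≥ 1 and constant λ > 1, and let φ : {−,+}^ℤ → B^ℤ assign to each s the unique sequence ξ with ξ_t = f_{s_t}(ξ_{t−1}) for all t ∈ ℤ. Let Σ̃ = φ({−,+}^ℤ) ⊆ ℝ^ℤ. Then, with {−,+}^ℤ and Σ̃ both carrying the product topology, φ is a homeomorphism from {−,+}^ℤ onto Σ̃, and it conjugates the shifts: φ(S(s)) = S(φ(s)) for every s ∈ {−,+}^ℤ, where S denotes the shift map (z_t)_t ↦ (z_{t+1})_t on each sequence space. In particular, the shift on Σ̃ is topologically conjugate to the full two-sided shift on two symbols. -/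
noncomputable section

/-- The two branches f₋, f₊ of the quadratic correspondence:
f_s(x) = (1/(2ā))(−b̄x + s√(Δx² + 4ā(rx+1))), with b̄ = 1 − ā − c̄, Δ = b̄² − 4āc̄;
the sign s is encoded by a boolean (`true` ↦ +, `false` ↦ −). -/
def fbr (r a c : ℝ) (s : Bool) (x : ℝ) : ℝ :=
  (1 / (2 * a)) * (-(1 - a - c) * x +
    (if s then (1 : ℝ) else -1) *
      Real.sqrt (((1 - a - c) ^ 2 - 4 * a * c) * x ^ 2 + 4 * a * (r * x + 1)))

/-- Composition of branches along a finite list of signs: for `l = [s₁, …, sₙ]`,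
`fcompL r a c l = f_{sₙ} ∘ ⋯ ∘ f_{s₁}`. -/
def fcompL (r a c : ℝ) : List Bool → ℝ → ℝ
  | [], x => x
  | s :: l, x => fcompL r a c l (fbr r a c s x)

/-- The t-th component 𝓕ⁿ_t(ξ; s) = f_{s_t} ∘ f_{s_{t−1}} ∘ ⋯ ∘ f_{s_{t−n+1}}(ξ_{t−n})
of the n-th iterate of the sequence map 𝓕(·; s). -/
def FnIter (r a c : ℝ) (n : ℕ) (s : ℤ → Bool) (ξ : ℤ → ℝ) (t : ℤ) : ℝ :=
  fcompL r a c (List.ofFn fun i : Fin n => s (t - n + 1 + i)) (ξ (t - n))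

theorem continuous_fbr_uncurry (r a c : ℝ) :
    Continuous fun p : Bool × ℝ => fbr r a c p.1 p.2 := by
  have hsign : Continuous fun p : Bool × ℝ => if p.1 then (1 : ℝ) else -1 :=
    (continuous_of_discreteTopology (f := fun s : Bool => if s then (1 : ℝ) else -1)).comp
      continuous_fst
  unfold fbr
  fun_prop

/-- Where the discriminant is positive, the value of a branch determines its sign. -/
theorem fbr_left_injective {r a c x : ℝ} (ha : a ≠ 0)
    (hx : 0 < ((1 - a - c) ^ 2 - 4 * a * c) * x ^ 2 + 4 * a * (r * x + 1)) :
    Function.Injective fun s => fbr r a c s x := by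
  intro s s' h
  have hsqrt := Real.sqrt_pos.mpr hx
  have h2a : 1 / (2 * a) ≠ 0 := by simp [ha]
  have h' := mul_left_cancel₀ h2a h
  cases s <;> cases s' <;> simp at h' ⊢ <;> linarith

/-- A map with closed graph and values in a compact set is continuous. -/
theorem continuous_of_isClosed_graph_of_mem_compact {X Y : Type*} [TopologicalSpace X]
    [TopologicalSpace Y] {K : Set Y} (hK : IsCompact K) {g : X → Y} (hgK : ∀ x, g x ∈ K)
    (hg : IsClosed {p : X × Y | p.2 = g p.1}) : Continuous g := by
  have : CompactSpace K := isCompact_iff_compactSpace.mp hK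
  have hcod : Continuous (Set.codRestrict g K hgK) := by
    refine continuous_iff_isClosed.mpr fun C hC => ?_
    have himage : Set.codRestrict g K hgK ⁻¹' C =
        Prod.fst '' {p : X × K | (p.2 : Y) = g p.1 ∧ p.2 ∈ C} := by
      ext x
      constructor
      · exact fun hx => ⟨(x, Set.codRestrict g K hgK x), ⟨rfl, hx⟩, rfl⟩
      · rintro ⟨⟨x, y⟩, ⟨hy, hyC⟩, rfl⟩
        have hxy : y = Set.codRestrict g K hgK x := Subtype.ext hy
        exact hxy ▸ hyC
    rw [himage]
    refine isClosedMap_fst_of_compactSpace _ (IsClosed.inter ?_ (hC.preimage continuous_snd))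
    exact hg.preimage (f := fun p : X × K => (p.1, (p.2 : Y))) (by fun_prop)
  exact continuous_subtype_val.comp hcod

/-- Proposition 4.4 of the paper.  If (r, ā, c̄) ∈ ℛₙ⁺ (witnessed by the
compact set B, n ≥ 1, λ > 1) and φ assigns to each symbol sequence s ∈ {−,+}^ℤ the unique
AI state with ξ_t = f_{s_t}(ξ_{t−1}), then, with the product topologies, φ is a
homeomorphism from {−,+}^ℤ onto Σ̃ = φ({−,+}^ℤ) conjugating the two shift maps; in
particular the shift on Σ̃ is topologically conjugate to the full two-sided 2-shift. -/
theorem AIstates_topologically_conjugate_full_shift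
    (r a c : ℝ) (ha : a ≠ 0)
    (B : Set ℝ) (hB : IsCompact B)
    (n : ℕ) (hn : 1 ≤ n) (lam : ℝ) (hlam : 1 < lam)
    (hpos : ∀ x ∈ B, 0 < ((1 - a - c) ^ 2 - 4 * a * c) * x ^ 2 + 4 * a * (r * x + 1))
    (hinv : ∀ s : Bool, ∀ x ∈ B, fbr r a c s x ∈ B)
    (hder : ∀ l : List Bool, l.length = n → ∀ x ∈ B, |deriv (fcompL r a c l) x| ≤ lam⁻¹)
    (φ : (ℤ → Bool) → (ℤ → ℝ))
    (hφ : ∀ s : ℤ → Bool,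
      (∀ t : ℤ, φ s t ∈ B) ∧ ∀ t : ℤ, φ s t = fbr r a c (s t) (φ s (t - 1)))
    (hφuniq : ∀ (s : ℤ → Bool) (ξ : ℤ → ℝ), (∀ t : ℤ, ξ t ∈ B) →
      (∀ t : ℤ, ξ t = fbr r a c (s t) (ξ (t - 1))) → ξ = φ s) :
    ∃ H : (ℤ → Bool) ≃ₜ ↥(Set.range φ),
      (∀ s : ℤ → Bool, (H s : ℤ → ℝ) = φ s) ∧
      ∀ s : ℤ → Bool, φ (shiftSeq s) = shiftSeq (φ s) := by
  have hcont : Continuous φ := by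
    refine continuous_of_isClosed_graph_of_mem_compact (isCompact_univ_pi fun _ : ℤ => hB)
      (fun s t _ => (hφ s).1 t) ?_
    have hgraph : {p : (ℤ → Bool) × (ℤ → ℝ) | p.2 = φ p.1} =
        ⋂ t : ℤ, {p | p.2 t ∈ B} ∩ {p | p.2 t = fbr r a c (p.1 t) (p.2 (t - 1))} := by
      ext ⟨s, ξ⟩
      simp only [Set.mem_ofPred_eq, Set.mem_iInter, Set.mem_inter_iff]
      constructor
      · rintro rfl t
        exact ⟨(hφ s).1 t, (hφ s).2 t⟩
      · exact fun h => hφuniq s ξ (fun t => (h t).1) fun t => (h t).2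
    rw [hgraph]
    refine isClosed_iInter fun t => (hB.isClosed.preimage (by fun_prop)).inter
      (isClosed_eq (by fun_prop) ?_)
    exact (continuous_fbr_uncurry r a c).comp
      (f := fun p : (ℤ → Bool) × (ℤ → ℝ) => (p.1 t, p.2 (t - 1))) (by fun_prop)
  have hinj : Function.Injective φ := by
    intro s s' h
    funext t
    refine fbr_left_injective ha (hpos _ ((hφ s).1 (t - 1))) ?_
    have h' := (hφ s').2 t
    rw [← h] at h'
    exact ((hφ s).2 t).symm.trans h'
  refine ⟨(hcont.isClosedEmbedding hinj).isEmbedding.toHomeomorph, fun s => rfl, fun s => ?_⟩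
  refine (hφuniq _ _ (fun t => (hφ s).1 (t + 1)) fun t => ?_).symm
  have h := (hφ s).2 (t + 1)
  rwa [show t + 1 - 1 = t - 1 + 1 by ring] at h
end
end

section
/- Let ᾱ₁ ∈ ℝ with ᾱ₁ ≠ 0, and let (ξ_t)_{t∈ℤ} be a sequence of reals with ξ_t·ξ_{t+1} = −ᾱ₁ for all t ∈ ℤ (so that each ξ_t ≠ 0 and ξ_{t+2} = ξ_t for all t; these are exactly the orbits of the relation ℰ(ᾱ₁, 0, 0, 0)). Then for every bounded sequence η = (η_t)_{t∈ℤ}, if a bounded sequence ζ = (ζ_t)_{t∈ℤ} satisfies ξ_{t−1}·ζ_t + ξ_t·ζ_{t−1} = η_t for all t ∈ ℤ, then the sequence ζ̂ defined by ζ̂_t = ζ_t + 1 for t even and ζ̂_t = ζ_t + ξ_t²/ᾱ₁ for t odd is a bounded solution of the same system and ζ̂ ≠ ζ. In particular, the linear operator on l∞(ℤ,ℝ) given by ζ ↦ (ξ_{t−1}·ζ_t + ξ_t·ζ_{t−1})_{t∈ℤ} is not injective, so every such orbit is a degenerate anti-integrable state. -/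
noncomputable section

/-- The perturbed sequence ζ̂ of Subsection 5.3: ζ̂_t = ζ_t + 1 for even t and
ζ̂_t = ζ_t + ξ_t²/ᾱ₁ for odd t. -/
def hatSeq (α : ℝ) (ξ ζ : ℤ → ℝ) : ℤ → ℝ :=
  fun t => if Even t then ζ t + 1 else ζ t + ξ t ^ 2 / α

/-- A sequence whose consecutive products are a fixed nonzero constant has period two. -/
theorem periodic_two_of_mul_succ_eq {c : ℝ} (hc : c ≠ 0) {ξ : ℤ → ℝ}
    (hξ : ∀ t : ℤ, ξ t * ξ (t + 1) = c) : Function.Periodic ξ 2 := by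
  intro t
  have hne : ξ (t + 1) ≠ 0 := right_ne_zero_of_mul (hξ t ▸ hc)
  have hnext : ξ (t + 1) * ξ (t + 2) = c := by
    simpa only [add_assoc, one_add_one_eq_two] using hξ (t + 1)
  exact mul_left_cancel₀ hne (by rw [hnext, mul_comm, hξ t])

/-- every orbit of the relation ℰ(ᾱ₁,0,0,0) (ᾱ₁ ≠ 0), i.e. every sequence
with ξ_t ξ_{t+1} = −ᾱ₁, is a degenerate AI state: whenever a bounded ζ solves
ξ_{t−1}ζ_t + ξ_t ζ_{t−1} = η_t for all t, so does the distinct bounded sequence ζ̂; in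
particular ζ ↦ (ξ_{t−1}ζ_t + ξ_t ζ_{t−1})_t is not injective on l∞(ℤ,ℝ). -/
theorem degenerate_AI_states
    (α : ℝ) (hα : α ≠ 0) (ξ : ℤ → ℝ)
    (hξ : ∀ t : ℤ, ξ t * ξ (t + 1) = -α)
    (η : ℤ → ℝ) (hη : BddSeq η)
    (ζ : ℤ → ℝ) (hζb : BddSeq ζ)
    (hζ : ∀ t : ℤ, ξ (t - 1) * ζ t + ξ t * ζ (t - 1) = η t) :
    BddSeq (hatSeq α ξ ζ) ∧
    (∀ t : ℤ, ξ (t - 1) * hatSeq α ξ ζ t + ξ t * hatSeq α ξ ζ (t - 1) = η t) ∧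
    hatSeq α ξ ζ ≠ ζ := by
  refine ⟨?_, fun t => ?_, fun h => ?_⟩
  · obtain ⟨M, hM⟩ := hζb
    have hper := periodic_two_of_mul_succ_eq (neg_ne_zero.mpr hα) hξ
    refine ⟨M + (1 + |ξ 1 ^ 2 / α|), fun t => ?_⟩
    unfold hatSeq
    split_ifs with ht
    · refine (abs_add_le _ _).trans (add_le_add (hM t) ?_)
      rw [abs_one]
      exact le_add_of_nonneg_right (abs_nonneg _)
    · obtain ⟨k, rfl⟩ := Int.not_even_iff_odd.mp ht
      have hodd : ξ (2 * k + 1) = ξ 1 := by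
        simpa [add_comm, mul_comm] using hper.int_mul k 1
      rw [hodd]
      exact (abs_add_le _ _).trans (add_le_add (hM _) (le_add_of_nonneg_left zero_le_one))
  · have hprod : ξ (t - 1) * ξ t = -α := by simpa using hξ (t - 1)
    rw [← hζ t]
    by_cases ht : Even t
    · have ht' : ¬ Even (t - 1) := by simpa [Int.even_sub_one] using ht
      simp only [hatSeq, if_pos ht, if_neg ht']
      field_simp
      linear_combination ξ (t - 1) * hprod
    · have ht' : Even (t - 1) := by simpa [Int.even_sub_one] using ht
      simp only [hatSeq, if_neg ht, if_pos ht']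
      field_simp
      linear_combination ξ t * hprod
  · simpa [hatSeq] using congrFun h 0
end
end

section
/- Let 0 < c̄ < 1 and let ℰ = ℰ(0, 1, 1−c̄, c̄) = {(u,v) ∈ ℝ×ℝ : −u + (1−c̄)·v² + c̄·u² = 0} (here b̄ = 1 − (1−c̄) − c̄ = 0). Then: (a) if (u,v) ∈ ℰ then 0 ≤ u ≤ 1/c̄; and (b) every orbit (ξ_t)_{t∈ℤ} of ℰ (i.e., every sequence with (ξ_t, ξ_{t+1}) ∈ ℰ for all t ∈ ℤ) satisfies ξ_t ≥ 0 and ξ_t = √(ξ_{t−1}·(1 − c̄·ξ_{t−1})/(1−c̄)) for all t ∈ ℤ; that is, every bi-infinite orbit of the correspondence lies on the upper branch f₊(u) = √(u·(1 − c̄·u)/(1−c̄)) of the ellipse. -/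
noncomputable section

/-- Membership in the ellipse, with the vanishing coefficients removed. -/
theorem mem_Erel_ellipse_iff {c u v : ℝ} :
    (u, v) ∈ Erel 0 1 (1 - c) c ↔ (1 - c) * v ^ 2 = u * (1 - c * u) := by
  simp only [Erel, Set.mem_ofPred_eq]
  constructor <;> intro h <;> linear_combination h

theorem fst_mem_Icc_of_mem_Erel_ellipse {c u v : ℝ} (h0 : 0 < c) (h1 : c < 1)
    (h : (u, v) ∈ Erel 0 1 (1 - c) c) : 0 ≤ u ∧ u ≤ 1 / c := by
  rw [mem_Erel_ellipse_iff] at h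
  have hprod : 0 ≤ u * (1 - c * u) := h ▸ mul_nonneg (sub_pos.2 h1).le (sq_nonneg v)
  have hu : 0 ≤ u := by nlinarith [mul_nonneg h0.le (sq_nonneg u)]
  refine ⟨hu, ?_⟩
  rw [le_div_iff₀ h0]
  by_contra! hlt
  have hpos : 0 < u := by nlinarith
  nlinarith

/-- for 0 < c̄ < 1, the relation ℰ(0, 1, 1−c̄, c̄) (an ellipse; b̄ = 0):
(a) any point (u,v) of the relation has 0 ≤ u ≤ 1/c̄; (b) every bi-infinite orbit lies on
the upper branch, i.e. ξ_t ≥ 0 and ξ_t = √(ξ_{t−1}(1 − c̄ ξ_{t−1})/(1 − c̄)) for all t. -/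
theorem orbits_lie_on_upper_branch
    (cb : ℝ) (h0 : 0 < cb) (h1 : cb < 1) :
    (∀ u v : ℝ, (u, v) ∈ Erel 0 1 (1 - cb) cb → 0 ≤ u ∧ u ≤ 1 / cb) ∧
    ∀ ξ : ℤ → ℝ, (∀ t : ℤ, (ξ t, ξ (t + 1)) ∈ Erel 0 1 (1 - cb) cb) →
      ∀ t : ℤ, 0 ≤ ξ t ∧
        ξ t = Real.sqrt (ξ (t - 1) * (1 - cb * ξ (t - 1)) / (1 - cb)) := by
  refine ⟨fun u v h => fst_mem_Icc_of_mem_Erel_ellipse h0 h1 h, fun ξ hξ t => ?_⟩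
  have hnonneg : 0 ≤ ξ t := (fst_mem_Icc_of_mem_Erel_ellipse h0 h1 (hξ t)).1
  refine ⟨hnonneg, ?_⟩
  have h := hξ (t - 1)
  rw [sub_add_cancel, mem_Erel_ellipse_iff] at h
  rw [← h, mul_div_cancel_left₀ _ (sub_pos.2 h1).ne', Real.sqrt_sq hnonneg]
end
end
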